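/- arXiv:1508.00050 — 2 statements merged into one kernel-verified Lean document; each statement's English description precedes it below -/
import Mathlib

section
/- For every α ∈ Φ⁺ one has w(α) ∩ k(α) = ∅ and w(α) ∪ k(α) = Φ⁺. -/
/-!
Join `β` to `β + γ` whenever `β`, `γ` and `β + γ` are positive roots. Then `w(α)` is the set of
positive roots from which `α` can be reached, and `rz(N)` consists of the roots outside `N` all of
whose successors lie in `N`. The height is strictly increasing along the edges, so the graph is
acyclic, and it is finite; the partition is a general fact about finite acyclic graphs of this kind.

*Disjointness* (`kIter_disjoint_wSet`). Every element of `n(α)` is strictly higher than `α`, every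
element of `w(α)` is at most as high, so `n(α)` misses `w(α)`. An element of `w(α)` other than `α`
has a successor in `w(α)`; if `k_i(α)` misses `w(α)`, such an element is therefore not in
`rz(k_i(α))`, and `k_{i+1}(α)` misses `w(α)` too.

*Covering* (`subset_wSet_union_kSet`). Take a root `β` of maximal height outside `w(α) ∪ k(α)`.
No successor of `β` lies in `w(α)`, since otherwise `β` would; so all of them lie in `k(α)`, and by
finiteness in a single `k_i(α)`. As `β ≠ α`, this puts `β` in `k_{i+1}(α)`, a contradiction.
-/

/-!
Combinatorics of closed patterns in the set of positive roots of a finite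
reduced irreducible crystallographic root system with a fixed base, following
"On the characters of the Sylow p-subgroups of untwisted Chevalley groups".
-/

namespace RSP

variable {V : Type*} [AddCommGroup V]

/-- `S` is a closed pattern (relative to the ambient set `Φ` of positive
roots): for all `a, b ∈ S` with `a + b ∈ Φ` one has `a + b ∈ S`. -/
def ClosedIn (Φ S : Set V) : Prop :=
  ∀ a ∈ S, ∀ b ∈ S, a + b ∈ Φ → a + b ∈ S

/-- `N` is a normal pattern in `Φ`: `N ⊆ Φ` and for all `a ∈ Φ`, `b ∈ N`
with `a + b ∈ Φ` one has `a + b ∈ N`. -/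
def NormalPattern (Φ N : Set V) : Prop :=
  N ⊆ Φ ∧ ∀ a ∈ Φ, ∀ b ∈ N, a + b ∈ Φ → a + b ∈ N

/-- `N` is normal in `S` (relative to `Φ`): for all `a ∈ S`, `b ∈ N` with
`a + b ∈ Φ` one has `a + b ∈ N`. -/
def NormalIn (Φ S N : Set V) : Prop :=
  ∀ a ∈ S, ∀ b ∈ N, a + b ∈ Φ → a + b ∈ N

/-- `rz(N) = {β ∈ Φ⁺ ∖ N : ∀ γ ∈ Φ⁺, β + γ ∉ Φ⁺ or β + γ ∈ N}`. -/
def rzSet (Φ N : Set V) : Set V :=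
  {b | b ∈ Φ \ N ∧ ∀ c ∈ Φ, b + c ∉ Φ ∨ b + c ∈ N}

/-- `a ≺ b` iff `b - a` is a sum of one or more elements of `Φ`. -/
def prec (Φ : Set V) (a b : V) : Prop :=
  ∃ m : Multiset V, m ≠ 0 ∧ (∀ v ∈ m, v ∈ Φ) ∧ b = a + m.sum

/-- `a ≼ b` iff `a ≺ b` or `a = b`. -/
def preceq (Φ : Set V) (a b : V) : Prop := prec Φ a b ∨ a = b

/-- The hook `h(a) = {γ ∈ Φ⁺ : a - γ ∈ Φ⁺ ∪ {0}}`. -/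
def hook (Φ : Set V) (a : V) : Set V :=
  {c | c ∈ Φ ∧ (a - c ∈ Φ ∨ a - c = 0)}

/-- `n₀(a) = {a}` and `n_{i+1}(a) = {b + c : b ∈ n_i(a), c ∈ Φ⁺} ∩ Φ⁺`. -/
def nIter (Φ : Set V) (a : V) : ℕ → Set V
  | 0 => {a}
  | i + 1 => {x | x ∈ Φ ∧ ∃ b ∈ nIter Φ a i, ∃ c ∈ Φ, x = b + c}

/-- `n(a) = ⋃_{i ≥ 1} n_i(a)`. -/
def nSet (Φ : Set V) (a : V) : Set V := ⋃ i : ℕ, nIter Φ a (i + 1)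

/-- `k₀(a) = n(a)` and `k_{i+1}(a) = (rz(k_i(a)) ∖ {a}) ∪ k_i(a)`. -/
def kIter (Φ : Set V) (a : V) : ℕ → Set V
  | 0 => nSet Φ a
  | i + 1 => (rzSet Φ (kIter Φ a i) \ {a}) ∪ kIter Φ a i

/-- `k(a) = ⋃_{i ≥ 0} k_i(a)`. -/
def kSet (Φ : Set V) (a : V) : Set V := ⋃ i : ℕ, kIter Φ a i

/-- `w₀(a) = {a}` and `w_{i+1}(a) = ⋃_{b ∈ w_i(a)} h(b)`. -/
def wIter (Φ : Set V) (a : V) : ℕ → Set V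
  | 0 => {a}
  | i + 1 => ⋃ b ∈ wIter Φ a i, hook Φ b

/-- `w(a) = ⋃_{i ≥ 0} w_i(a)`. -/
def wSet (Φ : Set V) (a : V) : Set V := ⋃ i : ℕ, wIter Φ a i

/-- The closed pattern generated by `M`: the intersection of all closed
patterns containing `M`. -/
def genPattern (Φ M : Set V) : Set V :=
  ⋂₀ {S : Set V | M ⊆ S ∧ S ⊆ Φ ∧ ClosedIn Φ S}

/-- The normal closure of `M` in a closed pattern `S`: the intersection of all
closed patterns `N` with `M ⊆ N ⊆ S` and `N ⊴ S`. -/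
def normalClosure (Φ S M : Set V) : Set V :=
  ⋂₀ {N : Set V | M ⊆ N ∧ N ⊆ S ∧ ClosedIn Φ N ∧ NormalIn Φ S N}

end RSP

open scoped RealInnerProductSpace

/-- A finite reduced irreducible crystallographic root system `roots` in a real
inner product space, together with a base `base` (so that every root is a
nonnegative or nonpositive integral combination of the base). -/
structure RSB (V : Type*) [NormedAddCommGroup V] [InnerProductSpace ℝ V] where
  roots : Set V
  base : Set V
  finite : roots.Finite
  zero_not_mem : (0 : V) ∉ roots
  span_top : Submodule.span ℝ roots = ⊤
  reduced : ∀ a ∈ roots, ∀ t : ℝ, t • a ∈ roots → t = 1 ∨ t = -1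
  reflection_mem : ∀ a ∈ roots, ∀ b ∈ roots,
      b - (2 * ⟪b, a⟫ / ⟪a, a⟫) • a ∈ roots
  crystallographic : ∀ a ∈ roots, ∀ b ∈ roots,
      ∃ z : ℤ, 2 * ⟪b, a⟫ / ⟪a, a⟫ = (z : ℝ)
  irreducible : ∀ A B : Set V, A ∪ B = roots → A.Nonempty → B.Nonempty →
      ∃ a ∈ A, ∃ b ∈ B, ⟪a, b⟫ ≠ 0
  base_subset : base ⊆ roots
  base_indep : LinearIndependent ℝ (fun x : ↥base => (x : V))
  base_decomp : ∀ a ∈ roots,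
      (∃ c : V →₀ ℕ, ↑c.support ⊆ base ∧ a = c.sum fun v k => k • v) ∨
      (∃ c : V →₀ ℕ, ↑c.support ⊆ base ∧ a = -(c.sum fun v k => k • v))

/-- The set `Φ⁺` of positive roots (w.r.t. the base) of a root system. -/
def RSB.pos {V : Type*} [NormedAddCommGroup V] [InnerProductSpace ℝ V]
    (R : RSB V) : Set V :=
  {a | a ∈ R.roots ∧ ∃ c : V →₀ ℕ, ↑c.support ⊆ R.base ∧ a = c.sum fun v k => k • v}

namespace RSP

section Abstract

variable {V : Type*} [AddCommGroup V] {Φ : Set V} {a : V}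

lemma self_mem_wSet : a ∈ wSet Φ a := Set.mem_iUnion.2 ⟨0, rfl⟩

lemma mem_wSet_of_hook {b c : V} (hb : b ∈ wSet Φ a) (hc : c ∈ hook Φ b) : c ∈ wSet Φ a := by
  obtain ⟨i, hi⟩ := Set.mem_iUnion.1 hb
  exact Set.mem_iUnion.2 ⟨i + 1, Set.mem_iUnion₂.2 ⟨b, hi, hc⟩⟩

lemma wSet_subset (ha : a ∈ Φ) : wSet Φ a ⊆ Φ := by
  refine Set.iUnion_subset fun i => ?_
  cases i with
  | zero => exact Set.singleton_subset_iff.2 ha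
  | succ i => exact Set.iUnion₂_subset fun b _ c hc => hc.1

/-- An element of `w(a)` other than `a` has a successor in `w(a)`. -/
lemma exists_succ_mem_wSet {b : V} (hb : b ∈ wSet Φ a) (hne : b ≠ a) :
    ∃ c ∈ Φ, b + c ∈ wSet Φ a := by
  obtain ⟨i, hi⟩ := Set.mem_iUnion.1 hb
  induction i with
  | zero => exact absurd hi hne
  | succ i ih =>
    obtain ⟨d, hd, hbd⟩ := Set.mem_iUnion₂.1 hi
    rcases hbd.2 with h | h
    · refine ⟨d - b, h, ?_⟩
      rw [add_sub_cancel]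
      exact Set.mem_iUnion.2 ⟨i, hd⟩
    · rw [sub_eq_zero.1 h] at hd
      exact ih hd

lemma kIter_mono : Monotone (kIter Φ a) :=
  monotone_nat_of_le_succ fun _ => Set.subset_union_right

lemma kSet_subset : kSet Φ a ⊆ Φ := by
  refine Set.iUnion_subset fun i => ?_
  induction i with
  | zero => exact Set.iUnion_subset fun i x hx => hx.1
  | succ i ih => exact Set.union_subset (fun x hx => hx.1.1.1) ih

variable (f : V →+ ℝ)

lemma height_le_of_mem_wSet (hf : ∀ x ∈ Φ, 0 < f x) {b : V} (hb : b ∈ wSet Φ a) : f b ≤ f a := by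
  obtain ⟨i, hi⟩ := Set.mem_iUnion.1 hb
  induction i generalizing b with
  | zero => exact (congrArg f hi).le
  | succ i ih =>
    obtain ⟨d, hd, hbd⟩ := Set.mem_iUnion₂.1 hi
    have hda := ih (Set.mem_iUnion.2 ⟨i, hd⟩) hd
    rcases hbd.2 with h | h
    · have := hf _ h
      rw [map_sub] at this
      linarith
    · rwa [← sub_eq_zero.1 h]

lemma height_lt_of_mem_nSet (hf : ∀ x ∈ Φ, 0 < f x) {b : V} (hb : b ∈ nSet Φ a) : f a < f b := by
  obtain ⟨i, hi⟩ := Set.mem_iUnion.1 hb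
  have key : ∀ i b, b ∈ nIter Φ a i → f a ≤ f b := by
    intro i
    induction i with
    | zero => exact fun b hb => (congrArg f hb).ge
    | succ i ih =>
      rintro b ⟨-, d, hd, c, hc, rfl⟩
      rw [map_add]
      linarith [ih d hd, hf c hc]
  obtain ⟨-, d, hd, c, hc, rfl⟩ := hi
  rw [map_add]
  linarith [key i d hd, hf c hc]

lemma kIter_disjoint_wSet (ha : a ∈ Φ) (hf : ∀ x ∈ Φ, 0 < f x) (i : ℕ) :
    ∀ b ∈ kIter Φ a i, b ∉ wSet Φ a := by
  induction i with
  | zero =>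
    intro b hb hw
    exact (height_lt_of_mem_nSet f hf hb).not_ge (height_le_of_mem_wSet f hf hw)
  | succ i ih =>
    rintro b (⟨hrz, hne⟩ | hb) hw
    · obtain ⟨c, hc, hbc⟩ := exists_succ_mem_wSet hw hne
      rcases hrz.2 c hc with h | h
      · exact h (wSet_subset ha hbc)
      · exact ih _ h hbc
    · exact ih b hb hw

/-- If all successors of `b` lie in `k(a)`, finiteness of `Φ` puts them into a common `k_i(a)`. -/
lemma mem_kSet_of_succ (hfin : Φ.Finite) {b : V} (hb : b ∈ Φ) (hne : b ≠ a)
    (h : ∀ c ∈ Φ, b + c ∈ Φ → b + c ∈ kSet Φ a) : b ∈ kSet Φ a := by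
  have hex : ∀ c, ∃ i, c ∈ Φ → b + c ∈ Φ → b + c ∈ kIter Φ a i := by
    intro c
    by_cases hc : c ∈ Φ ∧ b + c ∈ Φ
    · obtain ⟨i, hi⟩ := Set.mem_iUnion.1 (h c hc.1 hc.2)
      exact ⟨i, fun _ _ => hi⟩
    · exact ⟨0, fun h1 h2 => absurd ⟨h1, h2⟩ hc⟩
  choose i hi using hex
  obtain ⟨N, hN⟩ := (hfin.image i).bddAbove
  by_cases hbN : b ∈ kIter Φ a N
  · exact Set.mem_iUnion.2 ⟨N, hbN⟩
  refine Set.mem_iUnion.2 ⟨N + 1, Or.inl ⟨⟨⟨hb, hbN⟩, fun c hc => ?_⟩, hne⟩⟩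
  by_cases hbc : b + c ∈ Φ
  · exact Or.inr (kIter_mono (hN (Set.mem_image_of_mem i hc)) (hi c hc hbc))
  · exact Or.inl hbc

lemma subset_wSet_union_kSet (hfin : Φ.Finite) (hf : ∀ x ∈ Φ, 0 < f x) :
    Φ ⊆ wSet Φ a ∪ kSet Φ a := by
  rw [← Set.sdiff_eq_empty]
  by_contra hne
  obtain ⟨b, ⟨hb, hbn⟩, hmax⟩ :=
    (hfin.sdiff (t := wSet Φ a ∪ kSet Φ a)).exists_maximalFor f _
      (Set.nonempty_iff_ne_empty.2 hne)
  refine hbn (Or.inr (mem_kSet_of_succ hfin hb ?_ fun c hc hbc => ?_))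
  · rintro rfl
    exact hbn (Or.inl self_mem_wSet)
  by_contra hk
  have hw : b + c ∉ wSet Φ a := fun hw =>
    hbn (Or.inl (mem_wSet_of_hook hw ⟨hb, Or.inl (by simpa using hc)⟩))
  have hpos := hf c hc
  have hle : f (b + c) ≤ f b :=
    hmax (j := b + c) ⟨hbc, fun h => h.elim hw hk⟩ (by rw [map_add]; linarith)
  rw [map_add] at hle
  linarith

end Abstract

end RSP

/-- The height function: a linear functional taking the value `1` on the base is positive on
`Φ⁺`. -/
lemma RSB.exists_height {V : Type*} [NormedAddCommGroup V] [InnerProductSpace ℝ V] (R : RSB V) :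
    ∃ f : V →ₗ[ℝ] ℝ, ∀ x ∈ R.pos, 0 < f x := by
  have hli : LinearIndepOn ℝ id R.base := R.base_indep
  let B := Module.Basis.extend hli
  refine ⟨B.constr ℝ fun _ => (1 : ℝ), ?_⟩
  have hB : ∀ v ∈ R.base, (B.constr ℝ fun _ => (1 : ℝ)) v = 1 := by
    intro v hv
    have h := B.constr_basis ℝ (fun _ => (1 : ℝ)) ⟨v, hli.subset_extend _ hv⟩
    rwa [Module.Basis.extend_apply_self] at h
  rintro x ⟨hx, c, hc, rfl⟩
  rw [Finsupp.sum, map_sum]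
  refine Finset.sum_pos (fun v hv => ?_) ?_
  · rw [map_nsmul, hB v (hc hv), nsmul_one]
    exact_mod_cast Nat.pos_of_ne_zero (Finsupp.mem_support_iff.1 hv)
  · rw [Finsupp.support_nonempty_iff]
    rintro rfl
    exact R.zero_not_mem (by simpa using hx)

open RSP

/-- For every positive root `α` one has
`w(α) ∩ k(α) = ∅` and `w(α) ∪ k(α) = Φ⁺`. -/
theorem wSet_kSet_partition
    (V : Type*) [NormedAddCommGroup V] [InnerProductSpace ℝ V]
    [FiniteDimensional ℝ V]
    (R : RSB V) (a : V) (ha : a ∈ R.pos) :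
    wSet R.pos a ∩ kSet R.pos a = ∅ ∧ wSet R.pos a ∪ kSet R.pos a = R.pos := by
  obtain ⟨f, hf⟩ := R.exists_height
  have hfin : R.pos.Finite := R.finite.subset fun x hx => hx.1
  constructor
  · rw [Set.eq_empty_iff_forall_notMem]
    rintro b ⟨hw, hk⟩
    obtain ⟨i, hi⟩ := Set.mem_iUnion.1 hk
    exact kIter_disjoint_wSet f.toAddMonoidHom ha hf i b hi hw
  · exact Set.Subset.antisymm (Set.union_subset (wSet_subset ha) kSet_subset)
      (subset_wSet_union_kSet f.toAddMonoidHom hfin hf)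
end

section
/- Let α = e_1 + e_i with 1 < i ≤ n. Then: (a) n(α) and k(α) are normal patterns in Φ⁺; (b) n(α) = {e_1 + e_s : 1 < s < i}; and (c) k(α) = {e_s + e_t : 1 ≤ s < t < i}. -/
open RSP

/-- The standard basis vector `e_i` of `ℝⁿ`. -/
def eB (n : ℕ) (i : Fin n) : Fin n → ℝ := Pi.single i 1

/-- The positive roots of type `B_n`:
`{e_i - e_j, e_i + e_j : i < j} ∪ {e_i}`. -/
def posB (n : ℕ) : Set (Fin n → ℝ) :=
  {v | ∃ i j : Fin n, i < j ∧ (v = eB n i - eB n j ∨ v = eB n i + eB n j)} ∪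
    {v | ∃ i : Fin n, v = eB n i}

lemma eB_eval (n : ℕ) (a x : Fin n) : eB n a x = if x = a then 1 else 0 := by
  simp [eB, Pi.single_apply]

lemma eB_sum (n : ℕ) (a : Fin n) : ∑ x, eB n a x = 1 := by
  simp [eB_eval]

lemma sub_mem_posB {n : ℕ} {a b : Fin n} (h : a < b) : eB n a - eB n b ∈ posB n :=
  Or.inl ⟨a, b, h, Or.inl rfl⟩

lemma add_mem_posB {n : ℕ} {a b : Fin n} (h : a ≠ b) : eB n a + eB n b ∈ posB n := by
  rcases lt_or_gt_of_ne h with h | h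
  · exact Or.inl ⟨a, b, h, Or.inr rfl⟩
  · exact Or.inl ⟨b, a, h, Or.inr (add_comm _ _)⟩

lemma eB_mem_posB {n : ℕ} (a : Fin n) : eB n a ∈ posB n := Or.inr ⟨a, rfl⟩

lemma pair_eq {n : ℕ} {a b p q : Fin n} (hpq : p < q)
    (h : eB n a + eB n b = eB n p + eB n q) : (a = p ∧ b = q) ∨ (a = q ∧ b = p) := by
  have h1 := congrFun h p
  have h2 := congrFun h q
  simp only [Pi.add_apply, eB_eval, hpq.ne, hpq.ne', if_true, if_false] at h1 h2
  by_cases e1 : p = a <;> by_cases e2 : p = b <;> by_cases e3 : q = a <;> by_cases e4 : q = b <;>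
    simp [e1, e2, e3, e4] at h1 h2 <;> grind

/-- A positive root added to `e_s + e_t` lowers one of the two indices.
The last clause records that an index `0` in the given pair stays in place. -/
lemma add_root_of_pair {n : ℕ} {s t : Fin n} (hst : s < t) {c : Fin n → ℝ} (hc : c ∈ posB n)
    (h : eB n s + eB n t + c ∈ posB n) :
    ∃ p q : Fin n, p < q ∧ eB n s + eB n t + c = eB n p + eB n q ∧ q ≤ t ∧
      (p : ℕ) + q < (s : ℕ) + t ∧ ((s : ℕ) = 0 → p = s) := by
  generalize hd : eB n s + eB n t + c = d at h
  have hsum : (2 : ℝ) + ∑ x, c x = ∑ x, d x := by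
    rw [← hd]
    simp only [Pi.add_apply, Finset.sum_add_distrib, eB_sum]
    norm_num
  have key : ∃ a b p q : Fin n, a < b ∧ p < q ∧ c = eB n a - eB n b ∧
      d = eB n p + eB n q := by
    rcases hc with ⟨a, b, hab, rfl | rfl⟩ | ⟨a, rfl⟩ <;>
      rcases h with ⟨p, q, hpq, rfl | rfl⟩ | ⟨p, rfl⟩ <;>
      simp only [Pi.add_apply, Pi.sub_apply, Finset.sum_add_distrib, Finset.sum_sub_distrib,
        eB_sum] at hsum <;>
      first
        | exact ⟨a, b, p, q, hab, hpq, rfl, rfl⟩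
        | (exfalso; norm_num at hsum)
  obtain ⟨a, b, p, q, hab, hpq, rfl, rfl⟩ := key
  refine ⟨p, q, hpq, rfl, ?_⟩
  -- The coordinate `b` of the result is nonnegative, so the subtracted `e_b` cancels `e_s` or `e_t`.
  have hb : b = s ∨ b = t := by
    by_contra! hne
    have := congrFun hd b
    simp only [Pi.add_apply, Pi.sub_apply, eB_eval, hne.1, hne.2, hab.ne', if_true,
      if_false] at this
    split_ifs at this <;> norm_num at this
  rcases hb with rfl | rfl
  · have h' : eB n t + eB n a = eB n p + eB n q := by rw [← hd]; abel
    rcases pair_eq hpq h' with ⟨rfl, rfl⟩ | ⟨rfl, rfl⟩ <;>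
      simp only [Fin.lt_def, Fin.le_def, Fin.ext_iff] at hst hab hpq ⊢ <;>
      refine ⟨?_, ?_, fun hz => ?_⟩ <;> omega
  · have h' : eB n s + eB n a = eB n p + eB n q := by rw [← hd]; abel
    rcases pair_eq hpq h' with ⟨rfl, rfl⟩ | ⟨rfl, rfl⟩ <;>
      simp only [Fin.lt_def, Fin.le_def, Fin.ext_iff] at hst hab hpq ⊢ <;>
      refine ⟨?_, ?_, fun hz => ?_⟩ <;> first | trivial | omega

/-- The set `{e_s + e_t : s < t < i}`. -/
def pairsBelow (n : ℕ) (i : Fin n) : Set (Fin n → ℝ) :=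
  {v | ∃ s t : Fin n, s < t ∧ t < i ∧ v = eB n s + eB n t}

lemma pair_notMem {n : ℕ} {i a b : Fin n} (h : i ≤ b) : eB n a + eB n b ∉ pairsBelow n i := by
  rintro ⟨s, t, hst, hti, he⟩
  rcases pair_eq hst he with ⟨rfl, rfl⟩ | ⟨rfl, rfl⟩
  · exact absurd h (not_le.2 hti)
  · exact absurd h (not_le.2 (hst.trans hti))

lemma eB_notMem {n : ℕ} {i a : Fin n} : eB n a ∉ pairsBelow n i := by
  rintro ⟨s, t, hst, hti, he⟩
  have h : ∑ x, eB n a x = ∑ x, (eB n s + eB n t) x := by rw [he]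
  simp only [Pi.add_apply, Finset.sum_add_distrib, eB_sum] at h
  norm_num at h

/-- For each type of root outside `K = pairsBelow n i` there is an explicit step that stays
outside `K`: add `e_b` to `e_a - e_b`, and aim for some root involving `e_i` otherwise. The root
`α` must be excluded: every root above it lies in `K`. -/
lemma exists_raise {n : ℕ} {i0 i : Fin n} (h0 : (i0 : ℕ) = 0) (hi : i0 < i) {b : Fin n → ℝ}
    (hb : b ∈ posB n) (hbK : b ∉ pairsBelow n i) (hba : b ≠ eB n i0 + eB n i) :
    ∃ c ∈ posB n, b + c ∈ posB n ∧ b + c ∉ pairsBelow n i := by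
  have hmin : ∀ a : Fin n, a ≠ i0 → i0 < a := by
    intro a ha
    rw [Fin.lt_def]
    have := Fin.val_ne_of_ne ha
    omega
  rcases hb with ⟨a, b, hab, rfl | rfl⟩ | ⟨a, rfl⟩
  · refine ⟨eB n b, eB_mem_posB b, ?_⟩
    rw [sub_add_cancel]
    exact ⟨eB_mem_posB a, eB_notMem⟩
  · have hib : i ≤ b := by
      by_contra hlt
      exact hbK ⟨a, b, hab, not_le.1 hlt, rfl⟩
    rcases hib.eq_or_lt with rfl | hib
    · have ha : i0 < a := hmin a (by rintro rfl; exact hba rfl)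
      refine ⟨eB n i0 - eB n a, sub_mem_posB ha, ?_⟩
      have e : eB n a + eB n i + (eB n i0 - eB n a) = eB n i0 + eB n i := by abel
      rw [e]
      exact ⟨add_mem_posB hi.ne, pair_notMem le_rfl⟩
    · by_cases hai : a = i
      · subst hai
        refine ⟨eB n i0 - eB n b, sub_mem_posB (hi.trans hib), ?_⟩
        have e : eB n a + eB n b + (eB n i0 - eB n b) = eB n i0 + eB n a := by abel
        rw [e]
        exact ⟨add_mem_posB hi.ne, pair_notMem le_rfl⟩
      · refine ⟨eB n i - eB n b, sub_mem_posB hib, ?_⟩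
        have e : eB n a + eB n b + (eB n i - eB n b) = eB n a + eB n i := by abel
        rw [e]
        exact ⟨add_mem_posB hai, pair_notMem le_rfl⟩
  · by_cases hai : a = i
    · subst hai
      refine ⟨eB n i0, eB_mem_posB i0, ?_⟩
      rw [add_comm]
      exact ⟨add_mem_posB hi.ne, pair_notMem le_rfl⟩
    · exact ⟨eB n i, eB_mem_posB i, add_mem_posB hai, pair_notMem le_rfl⟩

lemma nSet_eq {n : ℕ} {i0 i : Fin n} (h0 : (i0 : ℕ) = 0) (hi : i0 < i) :
    nSet (posB n) (eB n i0 + eB n i) =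
      {v | ∃ s : Fin n, i0 < s ∧ s < i ∧ v = eB n i0 + eB n s} := by
  have step : ∀ t : Fin n, i0 < t → ∀ c ∈ posB n, eB n i0 + eB n t + c ∈ posB n →
      ∃ q : Fin n, i0 < q ∧ q < t ∧ eB n i0 + eB n t + c = eB n i0 + eB n q := by
    intro t ht c hc h
    obtain ⟨p, q, hpq, he, -, hlt, hp⟩ := add_root_of_pair ht hc h
    obtain rfl := hp h0
    exact ⟨q, hpq, by rw [Fin.lt_def]; omega, he⟩
  ext v
  simp only [nSet, Set.mem_iUnion, Set.mem_ofPred_eq]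
  constructor
  · rintro ⟨m, hm⟩
    induction m generalizing v with
    | zero =>
      obtain ⟨hv, b, rfl, c, hc, rfl⟩ := hm
      exact step i hi c hc hv
    | succ m ih =>
      obtain ⟨hv, b, hb, c, hc, rfl⟩ := hm
      obtain ⟨t, ht, hti, rfl⟩ := ih b hb
      obtain ⟨q, hq, hqt, he⟩ := step t ht c hc hv
      exact ⟨q, hq, hqt.trans hti, he⟩
  · rintro ⟨s, hs, hsi, rfl⟩
    refine ⟨0, add_mem_posB hs.ne, _, rfl, eB n s - eB n i, sub_mem_posB hsi, ?_⟩
    abel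

lemma kIter_subset {n : ℕ} {i0 i : Fin n} (h0 : (i0 : ℕ) = 0) (hi : i0 < i) (m : ℕ) :
    kIter (posB n) (eB n i0 + eB n i) m ⊆ pairsBelow n i := by
  induction m with
  | zero =>
    intro v hv
    obtain ⟨s, hs, hsi, rfl⟩ := (nSet_eq h0 hi).subset hv
    exact ⟨i0, s, hs, hsi, rfl⟩
  | succ m ih =>
    rintro v (⟨⟨⟨hv, -⟩, hrz⟩, hne⟩ | hv)
    · by_contra hK
      obtain ⟨c, hc, h1, h2⟩ := exists_raise h0 hi hv hK hne
      rcases hrz c hc with h | h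
      · exact h h1
      · exact h2 (ih h)
    · exact ih hv

/-- Every root reached from `e_s + e_t` by one addition has a smaller index sum, so it is already
present one stage earlier and `e_s + e_t` lies in the next `rz`. -/
lemma mem_kIter {n : ℕ} {i : Fin n} (i0 : Fin n) (m : ℕ) :
    ∀ s t : Fin n, s < t → t < i → (s : ℕ) + t ≤ m →
      eB n s + eB n t ∈ kIter (posB n) (eB n i0 + eB n i) m := by
  induction m with
  | zero =>
    intro s t hst _ hm
    rw [Fin.lt_def] at hst
    omega
  | succ m ih =>
    intro s t hst hti hm
    by_cases hmem : eB n s + eB n t ∈ kIter (posB n) (eB n i0 + eB n i) m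
    · exact Or.inr hmem
    · refine Or.inl ⟨⟨⟨add_mem_posB hst.ne, hmem⟩, fun c hc => ?_⟩, fun he => ?_⟩
      · by_cases h : eB n s + eB n t + c ∈ posB n
        · obtain ⟨p, q, hpq, he, hqt, hlt, -⟩ := add_root_of_pair hst hc h
          rw [he]
          exact Or.inr (ih p q hpq (hqt.trans_lt hti) (by omega))
        · exact Or.inl h
      · exact pair_notMem (i := i) (a := i0) le_rfl ⟨s, t, hst, hti, he.symm⟩

lemma kSet_eq {n : ℕ} {i0 i : Fin n} (h0 : (i0 : ℕ) = 0) (hi : i0 < i) :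
    kSet (posB n) (eB n i0 + eB n i) = pairsBelow n i := by
  apply Set.Subset.antisymm
  · exact Set.iUnion_subset (kIter_subset h0 hi)
  · rintro v ⟨s, t, hst, hti, rfl⟩
    exact Set.mem_iUnion.2 ⟨(s : ℕ) + t, mem_kIter i0 _ s t hst hti le_rfl⟩

/-- type `B_n`.  For `α = e_1 + e_i` (with `e_1 = e i₀`
the first coordinate vector and `1 < i`):
(a) `n(α)` and `k(α)` are normal patterns in `Φ⁺`;
(b) `n(α) = {e_1 + e_s : 1 < s < i}`;
(c) `k(α) = {e_s + e_t : 1 ≤ s < t < i}`. -/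
theorem typeB_n_k
    (n : ℕ) (hn : 2 ≤ n) (i0 i : Fin n) (h0 : (i0 : ℕ) = 0) (hi : i0 < i) :
    NormalPattern (posB n) (nSet (posB n) (eB n i0 + eB n i)) ∧
    NormalPattern (posB n) (kSet (posB n) (eB n i0 + eB n i)) ∧
    nSet (posB n) (eB n i0 + eB n i) =
      {v | ∃ s : Fin n, i0 < s ∧ s < i ∧ v = eB n i0 + eB n s} ∧
    kSet (posB n) (eB n i0 + eB n i) =
      {v | ∃ s t : Fin n, s < t ∧ t < i ∧ v = eB n s + eB n t} := by
  refine ⟨?_, ?_, nSet_eq h0 hi, kSet_eq h0 hi⟩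
  · rw [nSet_eq h0 hi]
    refine ⟨?_, ?_⟩
    · rintro v ⟨s, hs, -, rfl⟩
      exact add_mem_posB hs.ne
    · rintro a ha b ⟨s, hs, hsi, rfl⟩ hab
      rw [add_comm] at hab ⊢
      obtain ⟨p, q, hpq, he, hqs, -, hp⟩ := add_root_of_pair hs ha hab
      obtain rfl := hp h0
      exact ⟨q, hpq, hqs.trans_lt hsi, he⟩
  · rw [kSet_eq h0 hi]
    refine ⟨?_, ?_⟩
    · rintro v ⟨s, t, hst, -, rfl⟩
      exact add_mem_posB hst.ne
    · rintro a ha b ⟨s, t, hst, hti, rfl⟩ hab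
      rw [add_comm] at hab ⊢
      obtain ⟨p, q, hpq, he, hqt, -⟩ := add_root_of_pair hst ha hab
      exact ⟨p, q, hpq, hqt.trans_lt hti, he⟩
end
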